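/- arXiv:2105.07860 — 3 statements merged into one kernel-verified Lean document; each statement's English description precedes it below -/
import Mathlib

section
/- Let k be a field of characteristic p > 0, L = k[t]/(t^p − ω) for some ω ∈ k, and let ∂ denote the derivation dual to dt. Then for f ∈ L, the p-fold composition of the derivation f∂ equals C·f∂, where C ∈ k is the coefficient of t^(p−1) in the truncated polynomial f^(p−1). In particular every derivation of L over k is p-closed. -/
/-!
Write `D = f ∂`, lift `f` to a monic polynomial `F` and work in `k[t]`. The operator
`Λ g = (F ∂)^(p-1) (F g)` is `F ^ p ∂^(p-1)` plus terms of order less than `p - 1`. Since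
`Λ (∂ a) = (F ∂)^p a` and `(F ∂)^p` is a derivation, `Λ` multiplies each `t ^ j` with `j < p - 1`
by `h = (F ∂)^p t`. These values determine the lower-order terms, so `Λ = F ^ p ∂^(p-1) + h`.
Evaluating at `g = F ^ (p-1)` and using `Λ (F ^ (p-1)) = (F ∂)^(p-1) (F ^ p) = 0`, we may cancel
`F ^ (p-1)` because `F` is monic, and obtain `h = -∂^(p-1) (F ^ (p-1)) F`. Finally `∂^(p-1)` is
linear over multiples of `t ^ p - ω`, and by Wilson's theorem `-∂^(p-1)` extracts the coefficient of
`t ^ (p-1)` from the reduced representative of `f ^ (p-1)`.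
-/

open Polynomial TensorProduct

theorem isUnit_natCast_of_not_dvd_charP (R : Type*) {A : Type*} [CommRing R] [CommRing A]
    [Algebra R A] {p : ℕ} [hp : Fact p.Prime] [CharP R p] {n : ℕ} (h : ¬p ∣ n) :
    IsUnit (n : A) := by
  simpa using ((CharP.isUnit_natCast_iff hp.out).mpr h : IsUnit (n : R)).map (algebraMap R A)

section Derivation

variable {R A : Type*} [CommRing R] [CommRing A] [Algebra R A]

theorem iterate_derivation_char_mul (p : ℕ) [hp : Fact p.Prime] [CharP R p]
    (D : Derivation R A A) (a b : A) :
    D^[p] (a * b) = a * D^[p] b + b * D^[p] a := by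
  let L : Module.End R (A ⊗[R] A) := D.toLinearMap.rTensor A
  let S : Module.End R (A ⊗[R] A) := D.toLinearMap.lTensor A
  have comm : Commute L S :=
    (LinearMap.rTensor_comp_lTensor ..).trans (LinearMap.lTensor_comp_rTensor ..).symm
  have semiconj : Function.Semiconj (LinearMap.mul' R A) (L + S : Module.End R (A ⊗[R] A)) D :=
    fun x => by
      induction x with
      | zero => simp
      | add x y hx hy => simp only [map_add, hx, hy]
      | tmul x y => simp [L, S, mul_comm, add_comm]
  obtain ⟨r, hr⟩ := comm.exists_add_pow_prime_eq hp.out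
  have expand := (semiconj.iterate_right p (a ⊗ₜ[R] b)).symm
  have char_smul (x : A ⊗[R] A) : (p : Module.End R (A ⊗[R] A)) x = 0 := by
    rw [Module.End.natCast_apply, ← Nat.cast_smul_eq_nsmul R, CharP.cast_eq_zero, zero_smul]
  rw [← Module.End.pow_apply, hr] at expand
  simpa [char_smul, L, S, LinearMap.rTensor_pow, LinearMap.lTensor_pow, Module.End.pow_apply,
    Module.End.mul_apply, mul_assoc, mul_comm, add_comm] using expand

/-- The `p`-fold composition of a derivation in characteristic `p`, as a derivation: the
`p`-operation of the restricted Lie algebra of derivations. The characteristic is imposed on the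
base ring rather than on `A`, so that `A` may be zero. -/
def derivationPowChar (p : ℕ) [Fact p.Prime] [CharP R p] (D : Derivation R A A) :
    Derivation R A A :=
  .mk' (D.toLinearMap ^ p) fun a b => by
    simpa only [Module.End.pow_apply, smul_eq_mul] using! iterate_derivation_char_mul p D a b

theorem derivationPowChar_apply (p : ℕ) [Fact p.Prime] [CharP R p] (D : Derivation R A A) (a : A) :
    derivationPowChar p D a = D^[p] a :=
  Module.End.pow_apply _ _ _

theorem exists_iterate_smul_derivation_mul_eq (D : Derivation R A A) (f c : A) (n : ℕ) :
    ∃ w : ℕ → A, ∀ g, (f • D)^[n] (c * g) =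
      c * f ^ n * D^[n] g + ∑ i ∈ Finset.range n, w i * D^[i] g := by
  induction n with
  | zero => exact ⟨0, by simp⟩
  | succ n ih =>
    obtain ⟨w, hw⟩ := ih
    let shifted : ℕ → A := fun i => i.casesOn 0 fun j => f * w j
    let lower : ℕ → A := fun i => if i = n then f * D (c * f ^ n) else f * D (w i)
    refine ⟨shifted + lower, fun g => ?_⟩
    have sum_shifted : ∑ i ∈ Finset.range (n + 1), shifted i * D^[i] g =
        ∑ i ∈ Finset.range n, f * w i * D^[i + 1] g := by
      simp [Finset.sum_range_succ', shifted]
    have sum_lower : ∑ i ∈ Finset.range (n + 1), lower i * D^[i] g =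
        ∑ i ∈ Finset.range n, f * D (w i) * D^[i] g + f * D (c * f ^ n) * D^[n] g := by
      rw [Finset.sum_range_succ]
      refine congrArg₂ _ (Finset.sum_congr rfl fun i hi => ?_) (by simp [lower])
      simp [lower, (Finset.mem_range.mp hi).ne]
    simp only [Pi.add_apply, add_mul, Finset.sum_add_distrib, sum_shifted, sum_lower]
    rw [Function.iterate_succ_apply', hw]
    simp only [Derivation.smul_apply, map_add, map_sum, D.leibniz (c * f ^ n), D.leibniz (w _),
      smul_eq_mul, Finset.sum_add_distrib, mul_add, Function.iterate_succ_apply']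
    simp only [mul_assoc, mul_left_comm, mul_comm, pow_succ]
    abel

theorem iterate_derivation_mul_of_map_eq_zero (D : Derivation R A A) {a : A} (ha : D a = 0)
    (b : A) (n : ℕ) : D^[n] (a * b) = a * D^[n] b :=
  have commute : Function.Commute (a * ·) D := fun b => by simp [ha]
  (commute.iterate_right n b).symm

theorem iterate_derivation_pow_of_map_eq_one (D : Derivation R A A) {t : A} (ht : D t = 1)
    (i j : ℕ) : D^[i] (t ^ j) = j.descFactorial i * t ^ (j - i) := by
  induction i with
  | zero => simp
  | succ i ih =>
    rw [Function.iterate_succ_apply', ih, D.leibniz, D.map_natCast, D.leibniz_pow, ht,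
      Nat.descFactorial_succ, Nat.sub_sub]
    simp [mul_assoc, mul_left_comm]

theorem eq_zero_of_sum_mul_iterate_derivation_pow_eq_zero {p : ℕ} [hp : Fact p.Prime] [CharP R p]
    (D : Derivation R A A) {t : A} (ht : D t = 1) {n : ℕ} (hn : n ≤ p) {w : ℕ → A}
    (h : ∀ j < n, ∑ i ∈ Finset.range n, w i * D^[i] (t ^ j) = 0) :
    ∀ j < n, w j = 0 := by
  intro j
  induction j using Nat.strong_induction_on with
  | _ j ih =>
    intro hj
    have factorial_unit : IsUnit (j.factorial : A) :=
      isUnit_natCast_of_not_dvd_charP R (by rw [hp.out.dvd_factorial]; omega)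
    have diagonal := h j hj
    rw [Finset.sum_eq_single_of_mem j (Finset.mem_range.mpr hj)] at diagonal
    · simpa [iterate_derivation_pow_of_map_eq_one D ht, Nat.descFactorial_self,
        factorial_unit.mul_left_eq_zero] using diagonal
    · intro i hi hij
      rcases hij.lt_or_gt with lt | gt
      · rw [ih i lt (Finset.mem_range.mp hi), zero_mul]
      · rw [iterate_derivation_pow_of_map_eq_one D ht, Nat.descFactorial_of_lt gt]
        simp

theorem iterate_pred_smul_derivation_mul_pow {p : ℕ} [hp : Fact p.Prime] [CharP R p]
    (D : Derivation R A A) {t : A} (ht : D t = 1) (f : A) {j : ℕ} (hj : j < p - 1) :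
    (f • D)^[p - 1] (f * t ^ j) = (f • D)^[p - 1] f * t ^ j := by
  have iterate_pred (a : A) : (f • D)^[p - 1] (f * D a) = derivationPowChar p (f • D) a := by
    rw [derivationPowChar_apply, ← Nat.sub_add_cancel hp.out.one_le, Function.iterate_succ_apply]
    rfl
  have map_t : derivationPowChar p (f • D) t = (f • D)^[p - 1] f := by
    rw [← iterate_pred, ht, mul_one]
  have unit : IsUnit ((j + 1 : ℕ) : A) :=
    isUnit_natCast_of_not_dvd_charP R (Nat.not_dvd_of_pos_of_lt j.succ_pos (by omega))
  have scaled : ((j + 1 : ℕ) : A) * (f • D)^[p - 1] (f * t ^ j) =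
      ((j + 1 : ℕ) : A) * ((f • D)^[p - 1] f * t ^ j) := by
    have key := iterate_pred (t ^ (j + 1))
    rw [Derivation.leibniz_pow, Derivation.leibniz_pow, ht, map_t, mul_smul_comm,
      iterate_map_nsmul] at key
    simpa only [nsmul_eq_mul, Nat.add_sub_cancel, smul_eq_mul, mul_one, mul_comm] using key
  exact unit.mul_left_cancel scaled

theorem iterate_pred_smul_derivation_mul {p : ℕ} [hp : Fact p.Prime] [CharP R p]
    (D : Derivation R A A) {t : A} (ht : D t = 1) (f g : A) :
    (f • D)^[p - 1] (f * g) = f ^ p * D^[p - 1] g + (f • D)^[p - 1] f * g := by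
  obtain ⟨w, hw⟩ := exists_iterate_smul_derivation_mul_eq D f f (p - 1)
  have hpos : 0 < p - 1 := Nat.sub_pos_of_lt hp.out.one_lt
  let rem : ℕ → A := w - Pi.single 0 ((f • D)^[p - 1] f)
  have sum_rem (a : A) : ∑ i ∈ Finset.range (p - 1), rem i * D^[i] a =
      ∑ i ∈ Finset.range (p - 1), w i * D^[i] a - (f • D)^[p - 1] f * a := by
    simp only [rem, Pi.sub_apply, sub_mul, Finset.sum_sub_distrib]
    congr 1
    rw [Finset.sum_eq_single_of_mem 0 (Finset.mem_range.mpr hpos)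
      fun i _ hi => by rw [Pi.single_eq_of_ne hi, zero_mul], Pi.single_eq_same,
      Function.iterate_zero_apply]
  have rem_eq_zero : ∀ i < p - 1, rem i = 0 := by
    refine eq_zero_of_sum_mul_iterate_derivation_pow_eq_zero D ht (Nat.sub_le p 1) fun j hj => ?_
    have hwj := hw (t ^ j)
    rw [iterate_pred_smul_derivation_mul_pow D ht f hj,
      iterate_derivation_pow_of_map_eq_one D ht, Nat.descFactorial_of_lt hj] at hwj
    rw [sum_rem, sub_eq_zero, hwj]
    simp
  have remainder := sum_rem g
  rw [Finset.sum_eq_zero fun i hi => by rw [rem_eq_zero i (Finset.mem_range.mp hi), zero_mul],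
    eq_comm, sub_eq_zero] at remainder
  rw [hw, remainder, mul_pow_sub_one hp.out.ne_zero]

theorem iterate_pred_smul_derivation_self {p : ℕ} [hp : Fact p.Prime] [CharP R p]
    (D : Derivation R A A) {t : A} (ht : D t = 1) {f : A} (hf : IsRegular f) :
    (f • D)^[p - 1] f = -(D^[p - 1] (f ^ (p - 1)) * f) := by
  have map_pow_char : (f • D) (f ^ p) = 0 := by
    rw [Derivation.leibniz_pow, ← Nat.cast_smul_eq_nsmul R, CharP.cast_eq_zero, zero_smul]
  have iterate_pow_char : (f • D)^[p - 1] (f ^ p) = 0 := by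
    rw [← Nat.sub_add_cancel (Nat.sub_pos_of_lt hp.out.one_lt), Function.iterate_succ_apply,
      map_pow_char, iterate_map_zero]
  have key := iterate_pred_smul_derivation_mul D ht f (f ^ (p - 1))
  rw [mul_pow_sub_one hp.out.ne_zero, iterate_pow_char, ← mul_pow_sub_one hp.out.ne_zero f] at key
  refine (hf.pow (p - 1)).right ?_
  linear_combination -key

end Derivation

theorem iterate_derivative_eq_C_of_degree_lt {R : Type*} [CommSemiring R] {Q : R[X]} {n : ℕ}
    (hQ : Q.degree < (n + 1 : ℕ)) : derivative^[n] Q = C (n.factorial * Q.coeff n) := by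
  ext m
  rw [coeff_iterate_derivative, coeff_C]
  split_ifs with hm
  · simp [hm, Nat.descFactorial_self]
  · rw [coeff_eq_zero_of_degree_lt (hQ.trans_le (by exact_mod_cast (by omega : n + 1 ≤ m + n))),
      smul_zero]

theorem natCast_factorial_pred_of_charP (R : Type*) [Ring R] (p : ℕ) [Fact p.Prime] [CharP R p] :
    ((p - 1).factorial : R) = -1 := by
  rw [← map_natCast (ZMod.castHom dvd_rfl R), ZMod.wilsons_lemma, map_neg, map_one]

section AdjoinRoot

variable {k : Type*} [CommRing k]

theorem derivation_adjoinRoot_mk {P : k[X]} (D : Derivation k (AdjoinRoot P) (AdjoinRoot P))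
    {F : k[X]} (hF : AdjoinRoot.mk P F = D (AdjoinRoot.root P)) (Q : k[X]) :
    D (AdjoinRoot.mk P Q) = AdjoinRoot.mk P ((F • derivative' : Derivation k k[X] k[X]) Q) := by
  rw [← AdjoinRoot.aeval_eq, Derivation.map_aeval, AdjoinRoot.aeval_eq, ← hF]
  simp [mul_comm]

theorem derivation_adjoinRoot_ext {P : k[X]} {D E : Derivation k (AdjoinRoot P) (AdjoinRoot P)}
    (h : D (AdjoinRoot.root P) = E (AdjoinRoot.root P)) : D = E :=
  Derivation.ext_of_adjoin_eq_top _ AdjoinRoot.adjoinRoot_eq_top (Set.eqOn_singleton.mpr h)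

theorem exists_monic_adjoinRoot_mk_eq {P : k[X]} (hP : P.Monic) (x : AdjoinRoot P) :
    ∃ F : k[X], F.Monic ∧ AdjoinRoot.mk P F = x := by
  obtain ⟨Q, rfl⟩ := AdjoinRoot.mk_surjective x
  refine ⟨Q %ₘ P + P, ?_, ?_⟩
  · nontriviality k
    exact hP.add_of_right (degree_modByMonic_lt Q hP)
  · rw [map_add, AdjoinRoot.mk_self, add_zero]
    simpa using AdjoinRoot.mk_leftInverse hP (AdjoinRoot.mk P Q)

theorem derivationPowChar_adjoinRoot_eq_smul {p : ℕ} [hp : Fact p.Prime] [CharP k p] {P : k[X]}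
    (hP : P.Monic) (hP' : derivative P = 0) (D : Derivation k (AdjoinRoot P) (AdjoinRoot P))
    {g : k[X]} (hg : AdjoinRoot.mk P g = D (AdjoinRoot.root P) ^ (p - 1)) :
    derivationPowChar p D = -AdjoinRoot.mk P (derivative^[p - 1] g) • D := by
  obtain ⟨F, hF_monic, hF⟩ := exists_monic_adjoinRoot_mk_eq hP (D (AdjoinRoot.root P))
  let E : Derivation k k[X] k[X] := F • derivative'
  have semiconj : Function.Semiconj (AdjoinRoot.mk P) E D :=
    fun Q => (derivation_adjoinRoot_mk D hF Q).symm
  have iterate_E : E^[p - 1] F = -(derivative^[p - 1] (F ^ (p - 1)) * F) :=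
    iterate_pred_smul_derivation_self derivative' derivative_X hF_monic.isRegular
  obtain ⟨Q, hQ⟩ : P ∣ F ^ (p - 1) - g := by
    rw [← AdjoinRoot.mk_eq_mk, map_pow, hF, hg]
  have iterate_lift : AdjoinRoot.mk P (derivative^[p - 1] (F ^ (p - 1))) =
      AdjoinRoot.mk P (derivative^[p - 1] g) := by
    rw [AdjoinRoot.mk_eq_mk, ← iterate_derivative_sub, hQ]
    exact ⟨_, iterate_derivation_mul_of_map_eq_zero derivative' hP' Q (p - 1)⟩
  apply derivation_adjoinRoot_ext
  calc derivationPowChar p D (AdjoinRoot.root P)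
      = D^[p - 1] (D (AdjoinRoot.root P)) := by
        rw [derivationPowChar_apply, ← Function.iterate_succ_apply, Nat.succ_eq_add_one,
          Nat.sub_add_cancel hp.out.one_le]
    _ = AdjoinRoot.mk P (E^[p - 1] F) := by rw [← hF, semiconj.iterate_right]
    _ = -AdjoinRoot.mk P (derivative^[p - 1] g) * D (AdjoinRoot.root P) := by
        rw [iterate_E, map_neg, map_mul, iterate_lift, hF, neg_mul]

end AdjoinRoot

theorem stmt3_general {k : Type*} [CommRing k] (p : ℕ) [Fact p.Prime] [CharP k p] (ω : k)
    (D : Derivation k (AdjoinRoot (X ^ p - C ω)) (AdjoinRoot (X ^ p - C ω)))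
    (g : k[X]) (hdeg : g.degree < p)
    (hg : AdjoinRoot.mk (X ^ p - C ω) g = D (AdjoinRoot.root (X ^ p - C ω)) ^ (p - 1)) :
    D.toLinearMap ^ p = g.coeff (p - 1) • D.toLinearMap := by
  have hp := (Fact.out : p.Prime)
  have monic : (X ^ p - C ω).Monic := monic_X_pow_sub_C ω hp.ne_zero
  have derivative_zero : derivative (X ^ p - C ω) = 0 := by
    simp [derivative_X_pow]
  have coeff_eq : AdjoinRoot.mk (X ^ p - C ω) (derivative^[p - 1] g) =
      -algebraMap k _ (g.coeff (p - 1)) := by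
    rw [iterate_derivative_eq_C_of_degree_lt (by rwa [Nat.sub_add_cancel hp.one_le]),
      natCast_factorial_pred_of_charP]
    simp
  ext x
  rw [Module.End.pow_apply]
  have key := DFunLike.congr_fun (derivationPowChar_adjoinRoot_eq_smul monic derivative_zero D hg) x
  rw [coeff_eq, neg_neg, derivationPowChar_apply, Derivation.smul_apply, smul_eq_mul,
    ← Algebra.smul_def] at key
  exact key

set_option maxHeartbeats 1000000 in
/-- Let `L = k[t]/(t^p - ω)` and let `D` be a `k`-derivation of `L`, so `D = f∂` with
`f = D t`.  If `g` is the truncated-polynomial representative (of degree `< p`) of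
`f^(p-1)`, then the `p`-fold composition of `D` equals `C • D` where `C = g.coeff (p-1)`
is the coefficient of `t^(p-1)` in `f^(p-1)`; in particular `D` is `p`-closed. -/
theorem stmt3 {k : Type*} [Field k] (p : ℕ) [Fact p.Prime] [CharP k p] (ω : k)
    (D : Derivation k (AdjoinRoot (Polynomial.X ^ p - Polynomial.C ω))
      (AdjoinRoot (Polynomial.X ^ p - Polynomial.C ω)))
    (g : Polynomial k) (hdeg : g.degree < p)
    (hg : AdjoinRoot.mk (Polynomial.X ^ p - Polynomial.C ω) g
      = D (AdjoinRoot.root (Polynomial.X ^ p - Polynomial.C ω)) ^ (p - 1)) :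
    D.toLinearMap ^ p = g.coeff (p - 1) • D.toLinearMap ∧
    ∃ c : k, D.toLinearMap ^ p = c • D.toLinearMap := by
  have h := stmt3_general p ω D g hdeg hg
  exact ⟨h, _, h⟩
end

section
/- Let k ⊂ E be a field extension with k algebraically closed, let h be a finite-dimensional restricted Lie algebra over k, g a restricted Lie algebra over E, and h → g an injective k-linear homomorphism of restricted Lie algebras. If every vector of g is p-closed (over E), then every vector of h is p-closed over k. -/
/-!
The `k`-action on `G` for which `φ` is linear (from `LieAlgebra k G`) is not tied to the `E`-action
(the scalar tower concerns the separate `Module k G`), so a relation between the iterates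
`pH^[n] x` does not show directly that the scalar `α` with `φ (pH x) = α • φ x` is algebraic
over `k`. The proof sees `φ` as an additive map and compares `φ (k ∙ x)` with the line `E ∙ φ x`.

* If `φ (k ∙ x) ⊆ E ∙ φ x`, let `N` be the largest `k`-subspace with `φ N ⊆ E ∙ φ x`. The map `pG`
  is additive on a line, so `pH` restricts to a Frobenius-semilinear map of `N`, injective unless
  `pH x = 0`. By Lang's theorem its fixed vectors span `N`. The ratio `r ∈ E` of the images of
  two nonzero fixed vectors satisfies `r ^ p = r`, that is `r ∈ 𝔽_p`, so `N` is a line.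
* Otherwise the additive map `c ↦ φ (c ^ p • pH x)` is pointwise a multiple of `c ↦ φ (c • x)`,
  whose values do not lie on one line, so the scalar is a constant `α`. The same comparison on
  `k ∙ x + k ∙ pH x` gives `α ^ p = α`, so `α ∈ 𝔽_p ⊆ k`.
-/

section Recursion

open Polynomial

variable {R : Type*} [CommSemiring R]

/-- The polynomials `Q` with `Q 0 = b 0 * X ^ p` and `Q (i + 1) = Q i ^ p + b (i + 1) * X ^ p`.
If `b` gives a relation between the iterates of a vector under a Frobenius-semilinear map, then the
coefficients of a fixed vector are the values of the `Q i` at a fixed point of the last one. -/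
noncomputable def frobeniusRecursion (p : ℕ) (b : ℕ → R) : ℕ → R[X]
  | 0 => C (b 0) * X ^ p
  | i + 1 => frobeniusRecursion p b i ^ p + C (b (i + 1)) * X ^ p

theorem X_pow_dvd_frobeniusRecursion {p : ℕ} (hp : p ≠ 0) (b : ℕ → R) (i : ℕ) :
    X ^ p ∣ frobeniusRecursion p b i := by
  induction i with
  | zero => exact dvd_mul_left _ _
  | succ i ih => exact dvd_add (ih.trans (dvd_pow_self _ hp)) (dvd_mul_left _ _)

theorem coeff_frobeniusRecursion {p : ℕ} (hp : 1 < p) (b : ℕ → R) (i : ℕ) :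
    (frobeniusRecursion p b i).coeff p = b i := by
  cases i with
  | zero => simp [frobeniusRecursion]
  | succ i =>
    have hdvd : X ^ (p * p) ∣ frobeniusRecursion p b i ^ p := by
      rw [pow_mul]
      exact pow_dvd_pow_of_dvd (X_pow_dvd_frobeniusRecursion (by lia) b i) p
    have hcoeff : (frobeniusRecursion p b i ^ p).coeff p = 0 :=
      X_pow_dvd_iff.1 hdvd p (lt_mul_self hp)
    simp [frobeniusRecursion, hcoeff]

theorem frobeniusRecursion_ne_zero [NoZeroDivisors R] {p : ℕ} (hp : 1 < p) {b : ℕ → R} {i m : ℕ}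
    (him : i ≤ m) (hb : b i ≠ 0) : frobeniusRecursion p b m ≠ 0 := by
  have ne_zero_of_ne_zero {j : ℕ} (hj : b j ≠ 0) : frobeniusRecursion p b j ≠ 0 := fun h =>
    hj (by rw [← coeff_frobeniusRecursion hp b j, h, coeff_zero])
  induction m, him using Nat.le_induction with
  | base => exact ne_zero_of_ne_zero hb
  | succ j _ ih =>
    by_cases hj : b (j + 1) = 0
    · have hpow : frobeniusRecursion p b (j + 1) = frobeniusRecursion p b j ^ p := by
        rw [frobeniusRecursion, hj, C_0, zero_mul, add_zero]
      rw [hpow]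
      exact pow_ne_zero p ih
    · exact ne_zero_of_ne_zero hj

variable {k : Type*} [Field k] [IsAlgClosed k]

theorem exists_ne_zero_eval_eq_self {Q : k[X]} (hQ : Q ≠ 0) (hX : X ^ 2 ∣ Q) :
    ∃ t : k, t ≠ 0 ∧ Q.eval t = t := by
  obtain ⟨R, rfl⟩ := hX
  have hdeg : (X * R).natDegree ≠ 0 := by
    rw [natDegree_X_mul (right_ne_zero_of_mul hQ)]
    exact Nat.succ_ne_zero _
  obtain ⟨t, ht⟩ := IsAlgClosed.eval_surjective hdeg 1
  simp only [eval_mul, eval_X] at ht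
  refine ⟨t, left_ne_zero_of_mul_eq_one ht, ?_⟩
  simp only [eval_mul, eval_pow, eval_X]
  linear_combination t * ht

theorem exists_frobenius_recursion {p : ℕ} (hp : 1 < p) {b : ℕ → k} {i m : ℕ} (him : i ≤ m)
    (hb : b i ≠ 0) :
    ∃ c : ℕ → k, c m ≠ 0 ∧ c 0 = c m ^ p * b 0 ∧
      ∀ j, c (j + 1) = c j ^ p + c m ^ p * b (j + 1) := by
  obtain ⟨t, ht0, ht⟩ := exists_ne_zero_eval_eq_self
    (frobeniusRecursion_ne_zero hp him hb)
    ((pow_dvd_pow X hp).trans (X_pow_dvd_frobeniusRecursion (by lia) b m))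
  refine ⟨fun j => (frobeniusRecursion p b j).eval t, ?_, ?_, fun j => ?_⟩
  · simpa only [ht] using ht0
  · simp only [ht, frobeniusRecursion, eval_mul, eval_C, eval_pow, eval_X, mul_comm]
  · simp only [ht, frobeniusRecursion, eval_add, eval_mul, eval_C, eval_pow, eval_X, mul_comm]

theorem exists_pow_sub_self_eq {p : ℕ} (hp : 1 < p) (a : k) : ∃ d : k, d ^ p - d = a := by
  have hdeg : (X ^ p - X : k[X]).natDegree ≠ 0 := by
    rw [FiniteField.X_pow_card_sub_X_natDegree_eq k hp]
    lia
  obtain ⟨d, hd⟩ := IsAlgClosed.eval_surjective hdeg a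
  exact ⟨d, by simpa using hd⟩

end Recursion

theorem exists_eq_sum_range_smul_and_notMem_span {k V : Type*} [Semiring k] [AddCommMonoid V]
    [Module k V] [IsNoetherian k V] (v : ℕ → V) (h0 : v 0 ≠ 0) :
    ∃ m, (∃ b : ℕ → k, v (m + 1) = ∑ i ∈ Finset.range (m + 1), b i • v i) ∧
      v m ∉ Submodule.span k (v '' Set.Iio m) := by
  classical
  have hmono : Monotone fun n => Submodule.span k (v '' Set.Iio n) := fun _ _ hab =>
    Submodule.span_mono (Set.image_mono (Set.Iio_subset_Iio hab))
  have hex : ∃ n, v n ∈ Submodule.span k (v '' Set.Iio n) := by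
    obtain ⟨n, hn⟩ := monotone_stabilizes_iff_noetherian.2 ‹_› ⟨_, hmono⟩
    refine ⟨n, ?_⟩
    have hstable : Submodule.span k (v '' Set.Iio n) = Submodule.span k (v '' Set.Iio (n + 1)) :=
      hn (n + 1) n.le_succ
    rw [hstable]
    exact Submodule.subset_span ⟨n, n.lt_succ_self, rfl⟩
  obtain ⟨m, hm⟩ : ∃ m, Nat.find hex = m + 1 :=
    Nat.exists_eq_succ_of_ne_zero fun h => h0 (by simpa [h] using Nat.find_spec hex)
  refine ⟨m, ?_, Nat.find_min hex (by lia)⟩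
  have hmem := Nat.find_spec hex
  rw [hm, ← Finset.coe_range, Submodule.mem_span_image_finset_iff_exists_fun] at hmem
  obtain ⟨b, hb⟩ := hmem
  refine ⟨Function.extend Subtype.val b 0, ?_⟩
  rw [← hb, ← Finset.sum_coe_sort (Finset.range (m + 1))
    fun i => Function.extend Subtype.val b 0 i • v i]
  simp only [Subtype.val_injective.extend_apply]

section Lang

variable {k V : Type*} [Field k] {p : ℕ} [Fact p.Prime] [CharP k p] [AddCommGroup V] [Module k V]
  {F : V →ₛₗ[frobenius k p] V}

theorem exists_mem_span_fixedPoints_map_eq [PerfectRing k p] {w : V}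
    (hw : w ∈ Submodule.span k (Function.fixedPoints F)) :
    ∃ u ∈ Submodule.span k (Function.fixedPoints F), F u = w := by
  induction hw using Submodule.closure_induction with
  | zero => exact ⟨0, zero_mem _, map_zero F⟩
  | add _ _ _ _ hx hy =>
    obtain ⟨u, hu, rfl⟩ := hx
    obtain ⟨u', hu', rfl⟩ := hy
    exact ⟨u + u', add_mem hu hu', map_add F u u'⟩
  | smul_mem a e he =>
    obtain ⟨d, rfl⟩ := surjective_frobenius k p a
    exact ⟨d • e, Submodule.smul_mem _ d (Submodule.subset_span he), by rw [map_smulₛₗ, he.eq]⟩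

variable [IsAlgClosed k]

theorem exists_ne_zero_fixed_of_injective [FiniteDimensional k V] [Nontrivial V]
    (hF : Function.Injective F) : ∃ v, v ≠ 0 ∧ F v = v := by
  obtain ⟨x, hx⟩ := exists_ne (0 : V)
  let v (n : ℕ) : V := F^[n] x
  have hFv (n : ℕ) : F (v n) = v (n + 1) := (Function.iterate_succ_apply' F n x).symm
  have hv0 (n : ℕ) : v n ≠ 0 := by
    induction n with
    | zero => exact hx
    | succ n ih => rwa [← hFv, map_ne_zero_iff F hF]
  obtain ⟨m, ⟨b, hb⟩, hm⟩ := exists_eq_sum_range_smul_and_notMem_span (k := k) v hx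
  obtain ⟨i, hi, hbi⟩ : ∃ i ∈ Finset.range (m + 1), b i • v i ≠ 0 :=
    Finset.exists_ne_zero_of_sum_ne_zero (hb ▸ hv0 (m + 1))
  obtain ⟨c, hcm, hc0, hc⟩ := exists_frobenius_recursion (Fact.out : p.Prime).one_lt
    (Finset.mem_range_succ_iff.1 hi) (left_ne_zero_of_smul hbi)
  refine ⟨∑ i ∈ Finset.range (m + 1), c i • v i, fun h => hm ?_, ?_⟩
  · rw [Finset.sum_range_succ, add_eq_zero_iff_neg_eq] at h
    rw [← Submodule.smul_mem_iff _ hcm, ← h]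
    exact neg_mem <| sum_mem fun i hi => Submodule.smul_mem _ _ <|
      Submodule.subset_span ⟨i, Finset.mem_range.1 hi, rfl⟩
  · calc F (∑ i ∈ Finset.range (m + 1), c i • v i)
        = ∑ i ∈ Finset.range m, c i ^ p • v (i + 1) + c m ^ p • v (m + 1) := by
          simp only [map_add, map_sum, map_smulₛₗ, frobenius_def, hFv, Finset.sum_range_succ]
      _ = ∑ i ∈ Finset.range m, (c i ^ p + c m ^ p * b (i + 1)) • v (i + 1)
            + (c m ^ p * b 0) • v 0 := by
          rw [hb, Finset.sum_range_succ']
          simp only [smul_add, Finset.smul_sum, smul_smul, add_smul, Finset.sum_add_distrib,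
            add_assoc]
      _ = ∑ i ∈ Finset.range (m + 1), c i • v i := by
          simp only [Finset.sum_range_succ', hc, hc0]

theorem exists_mem_span_fixedPoints_map_sub_eq {w : V}
    (hw : w ∈ Submodule.span k (Function.fixedPoints F)) :
    ∃ u ∈ Submodule.span k (Function.fixedPoints F), F u - u = w := by
  induction hw using Submodule.closure_induction with
  | zero => exact ⟨0, zero_mem _, by simp⟩
  | add _ _ _ _ hx hy =>
    obtain ⟨u, hu, rfl⟩ := hx
    obtain ⟨u', hu', rfl⟩ := hy
    exact ⟨u + u', add_mem hu hu', by rw [map_add, add_sub_add_comm]⟩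
  | smul_mem a e he =>
    obtain ⟨d, rfl⟩ := exists_pow_sub_self_eq (Fact.out : p.Prime).one_lt a
    refine ⟨d • e, Submodule.smul_mem _ d (Submodule.subset_span he), ?_⟩
    rw [map_smulₛₗ, he.eq, frobenius_def, sub_smul]

theorem span_fixedPoints_eq_top [FiniteDimensional k V] (hF : Function.Injective F) :
    Submodule.span k (Function.fixedPoints F) = ⊤ := by
  set W := Submodule.span k (Function.fixedPoints F) with hW
  have hFW : W ≤ W.comap F := by
    rw [hW, Submodule.span_le]
    exact fun e he => by simpa [he.eq] using Submodule.subset_span he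
  have hinj : Function.Injective (W.mapQ W F hFW) := by
    rw [injective_iff_map_eq_zero]
    intro z hz
    induction z using Submodule.Quotient.induction_on with | _ z
    rw [Submodule.mapQ_apply, Submodule.Quotient.mk_eq_zero] at hz
    obtain ⟨u, hu, huz⟩ := exists_mem_span_fixedPoints_map_eq hz
    rwa [Submodule.Quotient.mk_eq_zero, ← hF huz]
  by_contra htop
  have : Nontrivial (V ⧸ W) := Submodule.Quotient.nontrivial_iff.2 htop
  obtain ⟨z, hz0, hz⟩ := exists_ne_zero_fixed_of_injective hinj
  induction z using Submodule.Quotient.induction_on with | _ z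
  rw [Submodule.mapQ_apply, Submodule.Quotient.eq] at hz
  obtain ⟨u, hu, huz⟩ := exists_mem_span_fixedPoints_map_sub_eq hz
  have hfixed : F (z - u) = z - u := by
    rw [map_sub, sub_eq_sub_iff_sub_eq_sub, huz]
  have hzW : z ∈ W := by
    simpa using add_mem (Submodule.subset_span hfixed : z - u ∈ W) hu
  exact hz0 ((Submodule.Quotient.mk_eq_zero W).2 hzW)

theorem finrank_eq_one_of_fixed [FiniteDimensional k V] [Nontrivial V] (hF : Function.Injective F)
    (hfixed : ∀ e e', F e = e → F e' = e' → e ≠ 0 → ∃ c : k, c • e = e') :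
    Module.finrank k V = 1 := by
  obtain ⟨e, he0, he⟩ := exists_ne_zero_fixed_of_injective hF
  have hspan : Submodule.span k (Function.fixedPoints F) ≤ k ∙ e :=
    Submodule.span_le.2 fun e' he' =>
      Submodule.mem_span_singleton.2 (hfixed e e' he he' he0)
  rw [span_fixedPoints_eq_top hF] at hspan
  exact (finrank_eq_one_iff_of_nonzero' e he0).2 fun w =>
    Submodule.mem_span_singleton.1 (hspan Submodule.mem_top)

end Lang

section LocallyScalar

variable {A E G : Type*} [AddZeroClass A] [DivisionRing E] [AddCommGroup G] [Module E G]

theorem map_eq_smul_of_linearIndependent {f g : A →+ G} (hfg : ∀ a, ∃ α : E, g a = α • f a)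
    {a b : A} (hab : LinearIndependent E ![f a, f b]) {α : E} (ha : g a = α • f a) :
    g b = α • f b := by
  obtain ⟨β, hβ⟩ := hfg b
  obtain ⟨γ, hγ⟩ := hfg (a + b)
  have hsum : α • f a + β • f b = γ • f a + γ • f b := by
    rw [← ha, ← hβ, ← map_add, hγ, map_add, smul_add]
  obtain ⟨hαγ, hβγ⟩ := hab.eq_of_pair hsum
  rw [hβ, hβγ, hαγ]

theorem exists_forall_map_eq_smul {f g : A →+ G} (hfg : ∀ a, ∃ α : E, g a = α • f a)
    {a b : A} (hab : LinearIndependent E ![f a, f b]) : ∃ α : E, ∀ c, g c = α • f c := by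
  obtain ⟨α, ha⟩ := hfg a
  have hb : g b = α • f b := map_eq_smul_of_linearIndependent hfg hab ha
  refine ⟨α, fun c => ?_⟩
  by_cases hc : LinearIndependent E ![f a, f c]
  · exact map_eq_smul_of_linearIndependent hfg hc ha
  have hfa : f a ≠ 0 := hab.ne_zero 0
  rw [LinearIndependent.pair_iff' hfa] at hc
  push Not at hc
  obtain ⟨u, hu⟩ := hc
  rcases eq_or_ne u 0 with rfl | hu0
  · obtain ⟨γ, hγ⟩ := hfg c
    rw [hγ, ← hu, zero_smul, smul_zero, smul_zero]
  · have hcb : LinearIndependent E ![f c, f b] := by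
      simpa [hu] using (LinearIndependent.pair_smul_smul_iff hu0.isUnit isUnit_one).2 hab
    exact map_eq_smul_of_linearIndependent hfg (LinearIndependent.pair_symm_iff.1 hcb) hb

end LocallyScalar

/-- The largest `k`-submodule contained in an additive subgroup `S`. It is used for the preimage
`S` of a line under a map that is only additive. -/
def submoduleCore (k : Type*) {H : Type*} [Semiring k] [AddCommGroup H] [Module k H]
    (S : AddSubgroup H) : Submodule k H where
  carrier := {v | ∀ c : k, c • v ∈ S}
  zero_mem' c := by simpa only [smul_zero] using S.zero_mem
  add_mem' ha hb c := by simpa only [smul_add] using S.add_mem (ha c) (hb c)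
  smul_mem' d v hv c := by simpa only [smul_smul] using hv (c * d)

theorem mem_of_mem_submoduleCore {k H : Type*} [Semiring k] [AddCommGroup H] [Module k H]
    {S : AddSubgroup H} {v : H} (hv : v ∈ submoduleCore k S) : v ∈ S := by
  simpa only [one_smul] using hv 1

theorem exists_eq_smul_of_pow_eq_self {k E H G : Type*} [Ring k] [Field E] {p : ℕ} [Fact p.Prime]
    [CharP E p] [AddCommGroup H] [Module k H] [AddCommGroup G] [Module E G] {φ : H →+ G}
    (hφ : Function.Injective φ) {r : E} (hr : r ^ p = r) {v w : H} (hvw : φ w = r • φ v) :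
    ∃ c : k, w = c • v := by
  obtain ⟨n, rfl⟩ := (mem_bot_iff_intCast p E).1 ((Subfield.mem_bot_iff_pow_eq_self E p).2 hr)
  refine ⟨n, hφ ?_⟩
  rw [hvw, Int.cast_smul_eq_zsmul, Int.cast_smul_eq_zsmul, map_zsmul]

/-- `P` is a `p`-homogeneous map on a `k`-space which corresponds, under an additive map `φ` to an
`E`-space, to a `p`-homogeneous map for which every vector is `p`-closed over `E`. The map on the
`E`-space is not part of the data: only its values on the image of `φ` matter. -/
structure IsPClosedAlong (k E : Type*) {H G : Type*} [Semiring k] [Semiring E] [AddCommGroup H]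
    [Module k H] [AddCommGroup G] [Module E G] (p : ℕ) (φ : H →+ G) (P : H → H) : Prop where
  map_smul : ∀ (c : k) (v : H), P (c • v) = c ^ p • P v
  map_of_map_eq_smul : ∀ {u : E} {v w : H}, φ w = u • φ v → φ (P w) = u ^ p • φ (P v)
  exists_map_eq_smul : ∀ v : H, ∃ α : E, φ (P v) = α • φ v

namespace IsPClosedAlong

variable {k E H G : Type*} [Field k] [Field E] {p : ℕ} [AddCommGroup H] [Module k H]
  [AddCommGroup G] [Module E G] {φ : H →+ G} {P : H → H}

theorem eq_zero_of_mem_line (h : IsPClosedAlong k E p φ P) (hφ : Function.Injective φ)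
    {x v : H} (hx : P x ≠ 0) (hv : φ v ∈ E ∙ φ x) (hPv : P v = 0) : v = 0 := by
  obtain ⟨u, hu⟩ := Submodule.mem_span_singleton.1 hv
  have hzero : u ^ p • φ (P x) = 0 := by
    rw [← h.map_of_map_eq_smul hu.symm, hPv, map_zero]
  have hu0 : u = 0 := eq_zero_of_pow_eq_zero <|
    (smul_eq_zero.1 hzero).resolve_right ((map_ne_zero_iff φ hφ).2 hx)
  apply hφ
  rw [← hu, hu0, zero_smul, map_zero]

theorem map_pow_smul_map_map (h : IsPClosedAlong k E p φ P) {x : H} {α : E}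
    (hα : ∀ c : k, φ (c ^ p • P x) = α • φ (c • x)) (c : k) :
    φ ((c ^ p) ^ p • P (P x)) = (α ^ p * α) • φ (c • x) := by
  rw [← h.map_smul, h.map_of_map_eq_smul (hα c), h.map_smul, hα, mul_smul]

variable [Fact p.Prime]

protected theorem map_zero (h : IsPClosedAlong k E p φ P) : P 0 = 0 := by
  simpa [(Fact.out : p.Prime).ne_zero] using h.map_smul 0 0

section Line

variable {x : H}

theorem map_add_of_mem_line [CharP E p] (h : IsPClosedAlong k E p φ P)
    (hφ : Function.Injective φ) {v w : H} (hv : φ v ∈ E ∙ φ x) (hw : φ w ∈ E ∙ φ x) :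
    P (v + w) = P v + P w := by
  obtain ⟨s, hs⟩ := Submodule.mem_span_singleton.1 hv
  obtain ⟨t, ht⟩ := Submodule.mem_span_singleton.1 hw
  have hsum : φ (v + w) = (s + t) • φ x := by rw [map_add, add_smul, hs, ht]
  apply hφ
  rw [map_add, h.map_of_map_eq_smul hsum, h.map_of_map_eq_smul hs.symm,
    h.map_of_map_eq_smul ht.symm, add_pow_char, add_smul]

theorem exists_smul_eq_of_fixed [CharP E p] (h : IsPClosedAlong k E p φ P)
    (hφ : Function.Injective φ) {e e' : H} (he : φ e ∈ E ∙ φ x) (he' : φ e' ∈ E ∙ φ x)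
    (hPe : P e = e) (hPe' : P e' = e') (he0 : e ≠ 0) : ∃ c : k, c • e = e' := by
  obtain ⟨s, hs⟩ := Submodule.mem_span_singleton.1 he
  obtain ⟨t, ht⟩ := Submodule.mem_span_singleton.1 he'
  have hφe : φ e ≠ 0 := (map_ne_zero_iff φ hφ).2 he0
  have hs0 : s ≠ 0 := left_ne_zero_of_smul (hs ▸ hφe)
  have hratio : φ e' = (t / s) • φ e := by rw [← hs, ← ht, smul_smul, div_mul_cancel₀ t hs0]
  have hpow : (t / s) ^ p = t / s := by
    have hmap := h.map_of_map_eq_smul hratio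
    rw [hPe, hPe', hratio] at hmap
    exact (smul_left_injective E hφe hmap).symm
  obtain ⟨c, hc⟩ := exists_eq_smul_of_pow_eq_self (k := k) hφ hpow hratio
  exact ⟨c, hc.symm⟩

variable [IsAlgClosed k]

theorem map_mem_submoduleCore_line (h : IsPClosedAlong k E p φ P) {v : H}
    (hv : v ∈ submoduleCore k ((E ∙ φ x).toAddSubgroup.comap φ)) :
    P v ∈ submoduleCore k ((E ∙ φ x).toAddSubgroup.comap φ) := by
  intro c
  obtain ⟨d, rfl⟩ := IsAlgClosed.exists_pow_nat_eq c (Fact.out : p.Prime).pos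
  obtain ⟨u, hu⟩ := Submodule.mem_span_singleton.1 (hv d)
  obtain ⟨α, hα⟩ := h.exists_map_eq_smul x
  refine Submodule.mem_span_singleton.2 ⟨u ^ p * α, ?_⟩
  rw [← h.map_smul, h.map_of_map_eq_smul hu.symm, hα, mul_smul]

variable [CharP k p] [CharP E p]

/-- The restriction of `P` to the largest subspace that `φ` maps into the line `E ∙ φ x`, where it
is Frobenius-semilinear. -/
def restrictLine (h : IsPClosedAlong k E p φ P) (hφ : Function.Injective φ) (x : H) :
    submoduleCore k ((E ∙ φ x).toAddSubgroup.comap φ) →ₛₗ[frobenius k p]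
      submoduleCore k ((E ∙ φ x).toAddSubgroup.comap φ) where
  toFun v := ⟨P v, h.map_mem_submoduleCore_line v.2⟩
  map_add' v w := Subtype.ext <|
    h.map_add_of_mem_line hφ (mem_of_mem_submoduleCore v.2) (mem_of_mem_submoduleCore w.2)
  map_smul' c v := Subtype.ext (h.map_smul c v)

theorem exists_eq_smul_of_forall_mem_line [FiniteDimensional k H] (h : IsPClosedAlong k E p φ P)
    (hφ : Function.Injective φ) (hline : ∀ c : k, φ (c • x) ∈ E ∙ φ x) :
    ∃ c : k, P x = c • x := by
  rcases eq_or_ne (P x) 0 with hPx | hPx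
  · exact ⟨0, by rw [hPx, zero_smul]⟩
  let F := h.restrictLine hφ x
  have hF : Function.Injective F := by
    rw [injective_iff_map_eq_zero]
    exact fun v hv => Subtype.ext <|
      h.eq_zero_of_mem_line hφ hPx (mem_of_mem_submoduleCore v.2) (congrArg Subtype.val hv)
  let x' : submoduleCore k ((E ∙ φ x).toAddSubgroup.comap φ) := ⟨x, hline⟩
  have hx' : x' ≠ 0 := by
    intro hx'
    have hx : x = 0 := congrArg Subtype.val hx'
    exact hPx (by rw [hx, h.map_zero])
  have := nontrivial_of_ne x' 0 hx'
  have hdim := finrank_eq_one_of_fixed hF fun e e' he he' he0 => by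
    obtain ⟨c, hc⟩ := h.exists_smul_eq_of_fixed hφ (mem_of_mem_submoduleCore e.2)
      (mem_of_mem_submoduleCore e'.2) (congrArg Subtype.val he) (congrArg Subtype.val he')
      (fun h0 => he0 (Subtype.ext h0))
    exact ⟨c, Subtype.ext hc⟩
  obtain ⟨c, hc⟩ := exists_smul_eq_of_finrank_eq_one hdim hx' (F x')
  exact ⟨c, (congrArg Subtype.val hc).symm⟩

end Line

section Plane

variable {x : H} {α : E}

theorem exists_forall_map_pow_smul_eq [CharP k p] (h : IsPClosedAlong k E p φ P) {d : k}
    (hd : LinearIndependent E ![φ x, φ (d • x)]) :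
    ∃ α : E, ∀ c : k, φ (c ^ p • P x) = α • φ (c • x) := by
  let f : k →+ G := φ.comp ((smulAddHom k H).flip x)
  let g : k →+ G := φ.comp (((smulAddHom k H).flip (P x)).comp (frobenius k p).toAddMonoidHom)
  have hfg (c : k) : ∃ α : E, g c = α • f c := by
    obtain ⟨α, hα⟩ := h.exists_map_eq_smul (c • x)
    rw [h.map_smul] at hα
    exact ⟨α, hα⟩
  have hf : LinearIndependent E ![f 1, f d] := by
    have hf1 : f 1 = φ x := congrArg φ (one_smul k x)
    rwa [hf1]
  exact exists_forall_map_eq_smul hfg hf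

variable [CharP E p]

theorem map_smul_add_pow_smul_self (h : IsPClosedAlong k E p φ P) (hφ : Function.Injective φ)
    (hα : ∀ c : k, φ (c ^ p • P x) = α • φ (c • x)) (s : k) :
    P (s • x + s ^ p • P x) = s ^ p • P x + (s ^ p) ^ p • P (P x) := by
  have hsum : φ (s • x + s ^ p • P x) = (1 + α) • φ (s • x) := by
    rw [map_add, hα, add_smul, one_smul]
  apply hφ
  rw [h.map_of_map_eq_smul hsum, h.map_smul, hα, map_add, hα, h.map_pow_smul_map_map hα,
    add_pow_char, one_pow, smul_smul, add_mul, one_mul, add_smul]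

variable [IsAlgClosed k]

theorem map_add_pow_smul (h : IsPClosedAlong k E p φ P) (hφ : Function.Injective φ)
    (hα : ∀ c : k, φ (c ^ p • P x) = α • φ (c • x)) {d : k} (hd : d ≠ 0) :
    P (x + d ^ p • P x) = P x + (d ^ p) ^ p • P (P x) := by
  have hp := (Fact.out : p.Prime).one_lt
  -- If `s ^ (p - 1) = d ^ p`, then `s • (x + d ^ p • P x) = s • x + s ^ p • P x`.
  obtain ⟨s, hs⟩ := IsAlgClosed.exists_pow_nat_eq (d ^ p) (Nat.sub_pos_of_lt hp)
  have hs0 : s ≠ 0 := by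
    rintro rfl
    rw [zero_pow (by lia)] at hs
    exact pow_ne_zero p hd hs.symm
  have hsp : s ^ p = s * d ^ p := by rw [← hs, mul_pow_sub_one (by lia)]
  apply smul_right_injective H (pow_ne_zero p hs0)
  calc s ^ p • P (x + d ^ p • P x)
      = P (s • x + s ^ p • P x) := by rw [← h.map_smul, smul_add, smul_smul, ← hsp]
    _ = s ^ p • P x + (s ^ p) ^ p • P (P x) := h.map_smul_add_pow_smul_self hφ hα s
    _ = s ^ p • (P x + (d ^ p) ^ p • P (P x)) := by
      rw [smul_add, smul_smul, ← mul_pow, ← hsp]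

theorem pow_eq_self (h : IsPClosedAlong k E p φ P) (hφ : Function.Injective φ)
    (hα : ∀ c : k, φ (c ^ p • P x) = α • φ (c • x)) {d : k}
    (hd : LinearIndependent E ![φ x, φ (d • x)]) : α ^ p = α := by
  have hd0 : d ≠ 0 := by
    rintro rfl
    exact hd.ne_zero 1 (by simp)
  have hPx : φ (P x) = α • φ x := by simpa using hα 1
  obtain ⟨β, hβ⟩ := h.exists_map_eq_smul (x + d ^ p • P x)
  rw [h.map_add_pow_smul hφ hα hd0, map_add, map_add, h.map_pow_smul_map_map hα, hPx, hα, smul_add,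
    smul_smul] at hβ
  obtain ⟨rfl, hβα⟩ := hd.eq_of_pair hβ
  rcases eq_or_ne α 0 with rfl | hα0
  · exact zero_pow (Fact.out : p.Prime).ne_zero
  · exact mul_right_cancel₀ hα0 hβα

theorem exists_eq_smul_of_linearIndependent [CharP k p] (h : IsPClosedAlong k E p φ P)
    (hφ : Function.Injective φ) {d : k} (hd : LinearIndependent E ![φ x, φ (d • x)]) :
    ∃ c : k, P x = c • x := by
  obtain ⟨α, hα⟩ := h.exists_forall_map_pow_smul_eq hd
  exact exists_eq_smul_of_pow_eq_self hφ (h.pow_eq_self hφ hα hd) (by simpa using hα 1)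

end Plane

theorem exists_eq_smul [IsAlgClosed k] [CharP k p] [CharP E p] [FiniteDimensional k H]
    (h : IsPClosedAlong k E p φ P) (hφ : Function.Injective φ) (x : H) :
    ∃ c : k, P x = c • x := by
  by_cases hline : ∀ c : k, φ (c • x) ∈ E ∙ φ x
  · exact h.exists_eq_smul_of_forall_mem_line hφ hline
  push Not at hline
  obtain ⟨d, hd⟩ := hline
  have hx : φ x ≠ 0 := by
    intro hx
    have hx0 : x = 0 := (map_eq_zero_iff φ hφ).1 hx
    exact hd (by simp [hx0])
  have hpair : LinearIndependent E ![φ x, φ (d • x)] :=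
    (LinearIndependent.pair_iff' hx).2 fun u hu => hd (Submodule.mem_span_singleton.2 ⟨u, hu⟩)
  exact h.exists_eq_smul_of_linearIndependent hφ hpair

end IsPClosedAlong

theorem stmt11_general {k E : Type*} [Field k] [IsAlgClosed k] [Field E] (p : ℕ) [Fact p.Prime]
    [CharP k p] [CharP E p] {H G : Type*} [AddCommGroup H] [Module k H] [FiniteDimensional k H]
    [AddCommGroup G] [Module E G] (pH : H → H) (pG : G → G)
    (hpH : ∀ (c : k) (x : H), pH (c • x) = c ^ p • pH x)
    (hpG : ∀ (c : E) (y : G), pG (c • y) = c ^ p • pG y)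
    (φ : H →+ G) (hinj : Function.Injective φ)
    (hφp : ∀ x : H, φ (pH x) = pG (φ x))
    (hG : ∀ y : G, ∃ α : E, pG y = α • y) :
    ∀ x : H, ∃ c : k, pH x = c • x := by
  have h : IsPClosedAlong k E p φ pH :=
    { map_smul := hpH
      map_of_map_eq_smul := fun hvw => by rw [hφp, hφp, hvw, hpG]
      exists_map_eq_smul := fun v => by rw [hφp]; exact hG (φ v) }
  exact h.exists_eq_smul hinj

/-- Let `k ⊂ E` be a field extension with `k` algebraically closed, `H` a
finite-dimensional restricted Lie algebra over `k` (with `p`-map `pH`), `G` a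
restricted Lie algebra over `E` (with `p`-map `pG`), and `φ : H → G` an injective
homomorphism of restricted Lie algebras over `k`.  If every vector of `G` is
`p`-closed over `E`, then every vector of `H` is `p`-closed over `k`. -/
theorem stmt11 {k E : Type*} [Field k] [IsAlgClosed k] [Field E] [Algebra k E]
    (p : ℕ) [Fact p.Prime] [CharP k p]
    {H G : Type*} [LieRing H] [LieAlgebra k H] [FiniteDimensional k H]
    [LieRing G] [LieAlgebra E G] [Module k G] [LieAlgebra k G] [IsScalarTower k E G]
    (pH : H → H) (pG : G → G)
    (hpH : ∀ (c : k) (x : H), pH (c • x) = c ^ p • pH x)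
    (hpG : ∀ (c : E) (y : G), pG (c • y) = c ^ p • pG y)
    (φ : H →ₗ⁅k⁆ G) (hinj : Function.Injective φ)
    (hφp : ∀ x : H, φ (pH x) = pG (φ x))
    (hG : ∀ y : G, ∃ α : E, pG y = α • y) :
    ∀ x : H, ∃ c : k, pH x = c • x := by
  have : CharP E p := charP_of_injective_algebraMap (algebraMap k E).injective p
  exact stmt11_general p pH pG hpH hpG (φ : H →+ G) hinj hφp hG
end

section
/- Let k be a field of characteristic p > 0 and g the restricted Lie algebra with underlying space k[t]/(t^p) acting by derivations f∂ on k[t]/(t^p), bracket [t^i∂, t^j∂] = (j−i)t^{i+j−1}∂. If p ≥ 3, then g is a simple Lie algebra. -/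
/-- The Witt algebra `Der_k(k[t]/(t^p))` of derivations of the truncated polynomial
ring `k[t]/(t^p)`. -/
noncomputable abbrev WittAlg (k : Type*) [Field k] (p : ℕ) : Type _ :=
  Derivation k (AdjoinRoot ((Polynomial.X : Polynomial k) ^ p))
    (AdjoinRoot ((Polynomial.X : Polynomial k) ^ p))

/-!
Write `∂ = d/dt`, so that every derivation is a multiple `f∂`. A nonzero ideal `I` contains some
`f∂ ≠ 0`, and bracketing with `∂` differentiates `f`, so `I` contains `c∂` with `c` a nonzero
constant, hence `∂`. Then `I` contains `g'∂ = [∂, g∂]` for every `g`, in particular `t∂`, as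
`2t = (t²)'`. Finally `[∂, tg∂] - [t∂, g∂] = (tg)'∂ - (tg' - g)∂ = 2g∂` lies in `I`; this
reaches `t^(p-1)∂` too, although `t^(p-1)` has no antiderivative.
-/

section Derivation

variable {R A : Type*} [CommRing R] [CommRing A] [Algebra R A] {D : Derivation R A A} {t : A}

theorem derivation_lie_smul (D E : Derivation R A A) (a : A) :
    ⁅D, a • E⁆ = D a • E + a • ⁅D, E⁆ := by
  ext b
  simp only [Derivation.commutator_apply, Derivation.smul_apply, Derivation.add_apply,
    Derivation.leibniz, smul_eq_mul]
  ring

theorem derivation_lie_smul_self (D : Derivation R A A) (a : A) : ⁅D, a • D⁆ = D a • D := by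
  rw [derivation_lie_smul, lie_self, smul_zero, add_zero]

theorem derivation_apply_smul_eq_self (ht : Algebra.adjoin R {t} = ⊤) (hDt : D t = 1)
    (E : Derivation R A A) : E t • D = E :=
  Derivation.ext_of_adjoin_eq_top {t} ht <| by simp [hDt]

open Polynomial in
theorem derivation_iterate_aeval (hDt : D t = 1) (q : R[X]) (n : ℕ) :
    D^[n] (aeval t q) = aeval t (derivative^[n] q) := by
  have hsemiconj : Function.Semiconj (aeval t) (derivative (R := R)) D := fun r => by
    rw [Derivation.map_aeval, hDt, smul_eq_mul, mul_one]
  exact (hsemiconj.iterate_right n q).symm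

theorem exists_derivation_iterate_eq_zero (ht : Algebra.adjoin R {t} = ⊤) (hDt : D t = 1)
    (a : A) : ∃ n, D^[n] a = 0 := by
  have ha : a ∈ (Polynomial.aeval (R := R) t).range := by
    rw [← Algebra.adjoin_singleton_eq_range_aeval, ht]
    exact Algebra.mem_top
  obtain ⟨q, rfl⟩ := ha
  refine ⟨q.natDegree + 1, ?_⟩
  simp only [AlgHom.toRingHom_eq_coe, RingHom.coe_coe, derivation_iterate_aeval hDt,
    Polynomial.iterate_derivative_eq_zero q.natDegree.lt_succ_self, map_zero]

variable {I : LieIdeal R (Derivation R A A)}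

theorem derivation_smul_mem_of_mem (h2 : IsUnit (2 : R)) (hDt : D t = 1) (hD : D ∈ I) (a : A) :
    a • D ∈ I := by
  have hderiv (b : A) : D b • D ∈ I := by
    rw [← derivation_lie_smul_self]
    exact lie_mem_left R _ I _ _ hD
  have of_two_smul {E : Derivation R A A} (hE : (2 : R) • E ∈ I) : E ∈ I :=
    (Submodule.smul_mem_iff_of_isUnit I.toSubmodule h2).mp hE
  have htt : D (t * t) • D = (2 : R) • t • D := by
    rw [Derivation.leibniz, hDt, smul_eq_mul, mul_one, add_smul, two_smul]
  have htD : t • D ∈ I := of_two_smul (htt ▸ hderiv (t * t))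
  have hbracket : ⁅t • D, a • D⁆ = (t * D a - a) • D := by
    rw [derivation_lie_smul, ← lie_skew (t • D) D, derivation_lie_smul_self, hDt, one_smul,
      smul_neg, ← sub_eq_add_neg, ← sub_smul, Derivation.smul_apply, smul_eq_mul]
  have hbracket_mem : (t * D a - a) • D ∈ I := hbracket ▸ lie_mem_left R _ I _ _ htD
  have hdiff : D (t * a) • D - (t * D a - a) • D = (2 : R) • a • D := by
    rw [← sub_smul, Derivation.leibniz, hDt, smul_eq_mul, smul_eq_mul, mul_one,
      add_sub_sub_cancel, add_smul, two_smul]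
  exact of_two_smul (hdiff ▸ I.sub_mem (hderiv (t * a)) hbracket_mem)

end Derivation

section Field

variable {k A : Type*} [Field k] [CommRing A] [Algebra k A] {D : Derivation k A A}
  {I : LieIdeal k (Derivation k A A)}

theorem derivation_mem_of_smul_mem (hker : ∀ a, D a = 0 → a ∈ Set.range (algebraMap k A))
    {a : A} (ha : a ≠ 0) (haD : a • D ∈ I) {n : ℕ} (hn : D^[n] a = 0) : D ∈ I := by
  induction n generalizing a with
  | zero => exact absurd hn ha
  | succ n ih =>
    by_cases hDa : D a = 0
    · obtain ⟨c, rfl⟩ := hker a hDa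
      have hc : c ≠ 0 := by
        rintro rfl
        exact ha (map_zero _)
      rw [algebraMap_smul] at haD
      exact (I.toSubmodule.smul_mem_iff hc).mp haD
    · refine ih hDa ?_ hn
      rw [← derivation_lie_smul_self]
      exact lie_mem_right k _ I _ _ haD

theorem derivation_lieIdeal_eq_bot_or_eq_top (h2 : (2 : k) ≠ 0) {t : A}
    (ht : Algebra.adjoin k {t} = ⊤) (hDt : D t = 1)
    (hker : ∀ a, D a = 0 → a ∈ Set.range (algebraMap k A))
    (I : LieIdeal k (Derivation k A A)) : I = ⊥ ∨ I = ⊤ := by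
  refine or_iff_not_imp_left.mpr fun hI => ?_
  obtain ⟨E, hEI, hE⟩ : ∃ E ∈ I, E ≠ 0 := by
    rw [LieSubmodule.eq_bot_iff] at hI
    push Not at hI
    exact hI
  have hgen := derivation_apply_smul_eq_self ht hDt
  have hEt : E t ≠ 0 := fun h => hE <| by rw [← hgen E, h, zero_smul]
  obtain ⟨n, hn⟩ := exists_derivation_iterate_eq_zero ht hDt (E t)
  have hD : D ∈ I := derivation_mem_of_smul_mem hker hEt ((hgen E).symm ▸ hEI) hn
  refine eq_top_iff.mpr fun F _ => ?_
  rw [← hgen F]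
  exact derivation_smul_mem_of_mem h2.isUnit hDt hD (F t)

end Field

section AdjoinRoot

open Polynomial

variable {R : Type*} [CommRing R]

theorem dvd_derivative_of_dvd {f q : R[X]} (hf : f ∣ derivative f) (hq : f ∣ q) :
    f ∣ derivative q := by
  obtain ⟨r, rfl⟩ := hq
  rw [derivative_mul]
  exact dvd_add (hf.mul_right r) (dvd_mul_right f _)

/-- The derivation `d/dt` of `R[t]/(f)`, which exists when `f` divides its derivative `f'`: this is
the condition for `d/dt` to preserve the ideal `(f)` of `R[t]`. -/
noncomputable def adjoinRootDerivation (f : R[X]) (hf : f ∣ derivative f) :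
    Derivation R (AdjoinRoot f) (AdjoinRoot f) :=
  Derivation.liftOfSurjective (f := AdjoinRoot.mkₐ (R := R) f) (d := derivative')
    AdjoinRoot.mk_surjective fun _ hq =>
      AdjoinRoot.mk_eq_zero.mpr (dvd_derivative_of_dvd hf (AdjoinRoot.mk_eq_zero.mp hq))

theorem adjoinRootDerivation_mk {f : R[X]} (hf : f ∣ derivative f) (q : R[X]) :
    adjoinRootDerivation f hf (AdjoinRoot.mk f q) = AdjoinRoot.mk f (derivative q) := by
  rw [adjoinRootDerivation]
  exact Derivation.liftOfSurjective_apply (f := AdjoinRoot.mkₐ (R := R) f) _ _ q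

theorem adjoinRootDerivation_root {f : R[X]} (hf : f ∣ derivative f) :
    adjoinRootDerivation f hf (AdjoinRoot.root f) = 1 := by
  rw [← AdjoinRoot.mk_X, adjoinRootDerivation_mk, derivative_X, map_one]

theorem X_pow_dvd_derivative_X_pow (p : ℕ) [CharP R p] :
    (X ^ p : R[X]) ∣ derivative (X ^ p) := by
  rw [derivative_X_pow, CharP.cast_eq_zero, C_0, zero_mul]
  exact dvd_zero _

theorem X_pow_dvd_sub_C_of_dvd_derivative [NoZeroDivisors R] {p : ℕ} [CharP R p] {q : R[X]}
    (hq : X ^ p ∣ derivative q) : X ^ p ∣ q - C (q.coeff 0) := by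
  rw [X_pow_dvd_iff] at hq ⊢
  rintro (_ | d) hd
  · rw [coeff_sub, coeff_C_zero, sub_self]
  · have hcast : ((d + 1 : ℕ) : R) ≠ 0 := fun h =>
      Nat.not_dvd_of_pos_of_lt d.succ_pos hd ((CharP.cast_eq_zero_iff R p _).mp h)
    have hcoeff : q.coeff (d + 1) * ((d + 1 : ℕ) : R) = 0 := by
      simpa only [coeff_derivative, Nat.cast_succ] using hq d (d.lt_succ_self.trans hd)
    rw [coeff_sub, coeff_C_succ, sub_zero]
    exact (mul_eq_zero.mp hcoeff).resolve_right hcast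

theorem mem_range_algebraMap_of_adjoinRootDerivation_eq_zero [NoZeroDivisors R] {p : ℕ}
    [CharP R p] (hp : (X ^ p : R[X]) ∣ derivative (X ^ p)) {a : AdjoinRoot (X ^ p : R[X])}
    (ha : adjoinRootDerivation (X ^ p) hp a = 0) :
    a ∈ Set.range (algebraMap R (AdjoinRoot (X ^ p : R[X]))) := by
  obtain ⟨q, rfl⟩ := AdjoinRoot.mk_surjective a
  rw [adjoinRootDerivation_mk, AdjoinRoot.mk_eq_zero] at ha
  exact ⟨q.coeff 0, (AdjoinRoot.mk_eq_mk.mpr (X_pow_dvd_sub_C_of_dvd_derivative ha)).symm⟩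

end AdjoinRoot

set_option maxHeartbeats 1000000 in
/-- For `p ≥ 3`, the Witt algebra `g = Der_k(k[t]/(t^p))` is a simple Lie algebra:
it is nonzero and its only Lie ideals are `0` and `g`. -/
theorem stmt18 {k : Type*} [Field k] (p : ℕ) [Fact p.Prime] [CharP k p] (hp : 3 ≤ p) :
    Nontrivial (WittAlg k p) ∧
    ∀ I : LieIdeal k (WittAlg k p), I = ⊥ ∨ I = ⊤ := by
  have hdvd := X_pow_dvd_derivative_X_pow (R := k) p
  have hroot := adjoinRootDerivation_root hdvd
  have h2 : (2 : k) ≠ 0 := Ring.two_ne_zero (by rw [ringChar.eq k p]; omega)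
  have : Nontrivial (AdjoinRoot (Polynomial.X ^ p : Polynomial k)) :=
    AdjoinRoot.nontrivial _ (by rw [Polynomial.degree_X_pow]; exact_mod_cast (by omega : p ≠ 0))
  refine ⟨⟨adjoinRootDerivation _ hdvd, 0, fun h => ?_⟩, ?_⟩
  · rw [h, Derivation.zero_apply] at hroot
    exact zero_ne_one hroot
  · exact derivation_lieIdeal_eq_bot_or_eq_top h2 AdjoinRoot.adjoinRoot_eq_top hroot
      fun _ => mem_range_algebraMap_of_adjoinRootDerivation_eq_zero hdvd
end
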